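/- Let k be a field and let A = k[x_{i,j} : 1 ≤ i ≤ r, 1 ≤ j ≤ c]/I where I is generated by all 2×2 minors of the r×c matrix X = (x_{i,j}). Then the vanishing locus of the ideal (x_{i,j}) in Spec A is the unique singular point of Spec A when r, c ≥ 2, and away from this point Spec A is smooth of dimension r + c - 1. -/

import Mathlib

/- STATEMENT 0: The determinantal variety of rank ≤ 1 matrices
`Spec k[x_{i,j}]/(2×2 minors)` (r, c ≥ 2) has the vanishing locus of the ideal
(x_{i,j}) as its unique singular point, away from which it is smooth, and it
has dimension r + c - 1.  Smoothness of `Spec A` at a prime `P` over the field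
`k` is expressed by formal smoothness over `k` of the localization at `P`. -/

open MvPolynomial

/-!
Where `x_{i₀j₀}` is invertible, a matrix of rank at most one is uniquely `t u vᵀ` with `t` a unit
and `u_{i₀} = v_{j₀} = 1`, so this chart is an affine space times the punctured line. The charts
cover everything except the vertex, which is a closed point. As `A` is a Jacobson ring, a nonmaximal
prime of `A` stays nonmaximal in any chart containing it, so its height is less than the dimension
of that chart; this bounds the height of the vertex too.

At the vertex, let `𝔪` be the ideal of the origin in the polynomial ring `S` and `I ≤ 𝔪²` the ideal
of minors. If `A` is formally smooth there, then `S ⧸ I → S ⧸ (I + 𝔪ⁿ⁺¹)` lifts to `S ⧸ 𝔪ⁿ⁺¹`.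
Composed with `S → S ⧸ I`, the lift kills `I` and differs from the projection of `S` by elements of
`𝔪²`, hence on `𝔪ⁿ` by elements of `𝔪ⁿ⁺¹`. So `I ≤ 𝔪ⁿ` implies `I ≤ 𝔪ⁿ⁺¹`, but a nonzero minor is
not in `𝔪³`.
-/

section KrullDimension

variable {A : Type*} [CommRing A]

lemma ringKrullDim_le_of_isLocalization (M : Submonoid A) (S : Type*) [CommRing S] [Algebra A S]
    [IsLocalization M S] : ringKrullDim S ≤ ringKrullDim A := by
  rw [ringKrullDim_le_iff_height_le]
  intro Q hQ
  rw [← IsLocalization.height_under M]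
  exact Ideal.height_le_ringKrullDim_of_isPrime

lemma ringKrullDim_eq_add_one_of_isLocalization_away_X [IsNoetherianRing A]
    (S : Type*) [CommRing S] [Algebra (Polynomial A) S]
    [IsLocalization.Away (Polynomial.X : Polynomial A) S] :
    ringKrullDim S = ringKrullDim A + 1 := by
  refine le_antisymm ?_ ?_
  · rw [← Polynomial.ringKrullDim_of_isNoetherianRing]
    exact ringKrullDim_le_of_isLocalization (.powers (Polynomial.X : Polynomial A)) S
  · let evalOne : S →+* A := IsLocalization.Away.lift (Polynomial.X : Polynomial A)
      (g := Polynomial.evalRingHom 1) (by simp)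
    have evalOne_algebraMap (p : Polynomial A) :
        evalOne (algebraMap (Polynomial A) S p) = p.eval 1 :=
      IsLocalization.Away.lift_eq _ _ p
    refine ringKrullDim_succ_le_of_surjective evalOne
      (fun a => ⟨algebraMap _ S (Polynomial.C a), by simp [evalOne_algebraMap]⟩)
      (r := algebraMap (Polynomial A) S (Polynomial.X - Polynomial.C 1)) ?_
      (by rw [evalOne_algebraMap]; simp)
    exact IsLocalization.map_nonZeroDivisors_le (.powers (Polynomial.X : Polynomial A)) S
      (Submonoid.mem_map_of_mem _ (Polynomial.monic_X_sub_C 1).mem_nonZeroDivisors)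

lemma ringKrullDim_le_of_forall_exists_away_le [IsJacobsonRing A] {n : ℕ}
    (h : ∀ P : Ideal A, P.IsPrime → ¬ P.IsMaximal →
      ∃ f ∉ P, ringKrullDim (Localization.Away f) ≤ n) :
    ringKrullDim A ≤ n := by
  rw [ringKrullDim_le_iff_isMaximal_height_le]
  intro M hM
  suffices M.height ≤ n by exact_mod_cast this
  refine Ideal.height_le_iff.mpr fun P hP hPM => ?_
  have hPmax : ¬ P.IsMaximal := fun hPmax => hPM.ne (hPmax.eq_of_le hM.ne_top hPM.le)
  obtain ⟨f, hfP, hf⟩ := h P hP hPmax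
  have disj := (Ideal.disjoint_powers_iff_notMem_of_isPrime f).mpr hfP
  let Q := P.map (algebraMap A (Localization.Away f))
  have hQ : Q.IsPrime := IsLocalization.isPrime_of_isPrime_disjoint (.powers f) _ P hP disj
  have hQP : Q.under A = P := IsLocalization.under_map_of_isPrime_disjoint (.powers f) _ hP disj
  have hQmax : ¬ Q.IsMaximal := fun hQmax => hPmax <|
    hQP ▸ ((IsLocalization.isMaximal_iff_isMaximal_disjoint _ f Q).mp hQmax).1
  obtain ⟨N, hN, hQN⟩ := Q.exists_le_maximal hQ.ne_top
  have hlt : Q < N := hQN.lt_of_ne fun h => hQmax (h ▸ hN)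
  have hNn : N.height ≤ n := by
    exact_mod_cast (Ideal.height_le_ringKrullDim_of_isPrime (I := N)).trans hf
  rw [← hQP, IsLocalization.height_under (.powers f)]
  exact Ideal.height_le_iff.mp hNn Q hQ hlt

end KrullDimension

section FormallySmooth

variable {k A : Type*} [CommRing k] [CommRing A] [Algebra k A]

lemma formallySmooth_localization_atPrime_of_away {f : A} {P : Ideal A} [P.IsPrime] (hf : f ∉ P)
    [Algebra.FormallySmooth k (Localization.Away f)] :
    Algebra.FormallySmooth k (Localization.AtPrime P) := by
  have hle : Submonoid.powers f ≤ P.primeCompl := Submonoid.powers_le.mpr hf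
  let : Algebra (Localization.Away f) (Localization.AtPrime P) :=
    IsLocalization.localizationAlgebraOfSubmonoidLe _ _ (.powers f) P.primeCompl hle
  have : IsScalarTower A (Localization.Away f) (Localization.AtPrime P) :=
    IsLocalization.localization_isScalarTower_of_submonoid_le ..
  have : IsLocalization _ (Localization.AtPrime P) :=
    IsLocalization.isLocalization_of_submonoid_le (Localization.Away f) _ _ _ hle
  have : Algebra.FormallySmooth (Localization.Away f) (Localization.AtPrime P) :=
    .of_isLocalization (P.primeCompl.map (algebraMap A (Localization.Away f)))
  have : IsScalarTower k (Localization.Away f) (Localization.AtPrime P) := .to₁₃₄ k A _ _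
  exact .comp k (Localization.Away f) _

lemma map_sub_map_mem_pow_succ {S : Type*} [CommRing S] {φ ψ : A →+* S} {m : Ideal A} {J : Ideal S}
    (hψ : m ≤ J.comap ψ) (hφψ : ∀ a, φ a - ψ a ∈ J ^ 2) {n : ℕ} {a : A} (ha : a ∈ m ^ n) :
    φ a - ψ a ∈ J ^ (n + 1) := by
  have hψ_pow (n : ℕ) : m ^ n ≤ (J ^ n).comap ψ :=
    (Ideal.pow_right_mono hψ n).trans (Ideal.le_comap_pow ψ n)
  have hφ : m ≤ J.comap φ := fun a ha => by
    simpa using J.add_mem (Ideal.pow_le_self two_ne_zero (hφψ a)) (hψ ha)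
  induction n generalizing a with
  | zero => exact Ideal.pow_le_pow_right one_le_two (hφψ a)
  | succ n ih =>
    rw [pow_succ'] at ha
    induction ha using Submodule.mul_induction_on' with
    | mem_mul_mem a ha b hb =>
      have hsplit : φ (a * b) - ψ (a * b) = φ a * (φ b - ψ b) + (φ a - ψ a) * ψ b := by
        simp only [map_mul]; ring
      rw [hsplit]
      refine add_mem ?_ ?_
      · rw [pow_succ']
        exact Ideal.mul_mem_mul (hφ ha) (ih hb)
      · have : n + 1 + 1 = 2 + n := by ring
        rw [this, pow_add]
        exact Ideal.mul_mem_mul (hφψ a) (hψ_pow n hb)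
    | add a _ b _ ha hb =>
      simpa only [map_add, add_sub_add_comm] using add_mem ha hb

variable (k) in
lemma exists_lift_of_formallySmooth_localization {I m : Ideal A} [m.IsMaximal]
    [(m.map (Ideal.Quotient.mk I)).IsPrime]
    [Algebra.FormallySmooth k (Localization.AtPrime (m.map (Ideal.Quotient.mk I)))]
    {K : Ideal A} {n : ℕ} (hIK : I ≤ K) (hKm : K ≤ m) (hK : m ^ n ≤ K) :
    ∃ φ : A ⧸ I →ₐ[k] A ⧸ m ^ n, ∀ a,
      Ideal.Quotient.factor hK (φ (Ideal.Quotient.mk I a)) = Ideal.Quotient.mk K a := by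
  let Q := m.map (Ideal.Quotient.mk I)
  have isUnit_of_notMem (u : Q.primeCompl) : IsUnit (Ideal.Quotient.factorₐ k hIK u) := by
    obtain ⟨a, ha⟩ := Ideal.Quotient.mk_surjective u.1
    have ham : a ∉ m := fun ham => u.2 (ha ▸ Ideal.mem_map_of_mem _ ham)
    simpa [← ha] using
      (Ideal.Quotient.isUnit_mk_pow_of_notMem m ham).map (Ideal.Quotient.factor hK)
  let reduction : Localization.AtPrime Q →ₐ[k] A ⧸ K := IsLocalization.liftAlgHom isUnit_of_notMem
  have hker : IsNilpotent (RingHom.ker (Ideal.Quotient.factorₐ k hK : A ⧸ m ^ n →+* A ⧸ K)) := by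
    have hle : RingHom.ker (Ideal.Quotient.factor hK) ≤ m.map (Ideal.Quotient.mk (m ^ n)) := by
      rw [Ideal.Quotient.factor_ker]
      exact Ideal.map_mono hKm
    refine ⟨n, le_bot_iff.mp ((Ideal.pow_right_mono hle n).trans ?_)⟩
    rw [← Ideal.map_pow, Ideal.map_quotient_self]
  let lift := Algebra.FormallySmooth.liftOfSurjective reduction (Ideal.Quotient.factorₐ k hK)
    (Ideal.Quotient.factor_surjective hK) hker
  refine ⟨lift.comp (IsScalarTower.toAlgHom k (A ⧸ I) (Localization.AtPrime Q)), fun a => ?_⟩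
  refine (Algebra.FormallySmooth.liftOfSurjective_apply reduction _ _ hker _).trans ?_
  simp [reduction]

variable (k) in
theorem le_pow_of_formallySmooth_localization_quotient {I m : Ideal A} [m.IsMaximal]
    [(m.map (Ideal.Quotient.mk I)).IsPrime]
    [Algebra.FormallySmooth k (Localization.AtPrime (m.map (Ideal.Quotient.mk I)))]
    (hI : I ≤ m ^ 2) (n : ℕ) : I ≤ m ^ n := by
  induction n with
  | zero => simp
  | succ n ih =>
    obtain rfl | hn := n.eq_zero_or_pos
    · exact hI.trans (Ideal.pow_le_pow_right one_le_two)
    have hKm2 : I ⊔ m ^ (n + 1) ≤ m ^ 2 := sup_le hI (Ideal.pow_le_pow_right (by lia))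
    obtain ⟨φ, hφ⟩ := exists_lift_of_formallySmooth_localization k
      (le_sup_left : I ≤ I ⊔ m ^ (n + 1)) (hKm2.trans (Ideal.pow_le_self two_ne_zero)) le_sup_right
    let π := Ideal.Quotient.mk (m ^ (n + 1))
    have hφπ (a : A) : φ (Ideal.Quotient.mk I a) - π a ∈ m.map π ^ 2 := by
      rw [← Ideal.map_pow]
      refine Ideal.map_mono hKm2 ?_
      rw [← Ideal.Quotient.factor_ker le_sup_right, RingHom.sub_mem_ker_iff, hφ]
      simp [π]
    intro f hf
    have hπf := map_sub_map_mem_pow_succ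
      (φ := (φ : A ⧸ I →+* A ⧸ m ^ (n + 1)).comp (Ideal.Quotient.mk I)) (ψ := π)
      Ideal.le_comap_map hφπ (ih hf)
    simpa [π, Ideal.Quotient.eq_zero_iff_mem.mpr hf, ← Ideal.map_pow, Ideal.map_quotient_self,
      Ideal.Quotient.eq_zero_iff_mem] using hπf

end FormallySmooth

instance isMaximal_idealOfVars {k σ : Type*} [Field k] : (idealOfVars σ k).IsMaximal := by
  have hker : idealOfVars σ k = RingHom.ker (constantCoeff : MvPolynomial σ k →+* k) := by
    ext f
    rw [← pow_one (idealOfVars σ k), mem_pow_idealOfVars_iff']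
    simp [constantCoeff_eq, Finsupp.degree_eq_zero_iff]
  rw [hker]
  exact RingHom.ker_isMaximal_of_surjective _ fun a => ⟨C a, constantCoeff_C _ a⟩

/-- The ideal generated by the `2 × 2` minors of the generic `ι × κ` matrix; minors with a repeated
row or column vanish and are harmlessly kept among the generators. -/
noncomputable def twoMinorsIdeal (k ι κ : Type*) [CommRing k] : Ideal (MvPolynomial (ι × κ) k) :=
  Ideal.span {f | ∃ (i i' : ι) (j j' : κ), f = X (i, j) * X (i', j') - X (i, j') * X (i', j)}

/-- The coordinate ring of the scheme of `ι × κ` matrices of rank at most one. -/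
abbrev RankOneRing (k ι κ : Type*) [CommRing k] : Type _ :=
  MvPolynomial (ι × κ) k ⧸ twoMinorsIdeal k ι κ

namespace RankOneRing

section Basic

variable {k ι κ : Type*} [CommRing k]

variable (k) in
/-- The `(i, j)` entry of the universal matrix of rank at most one. -/
noncomputable def entry (i : ι) (j : κ) : RankOneRing k ι κ :=
  Ideal.Quotient.mk _ (X (i, j))

lemma entry_mul_entry (i i' : ι) (j j' : κ) :
    entry k i j * entry k i' j' = entry k i j' * entry k i' j := by
  simp only [entry, ← map_mul]
  exact Ideal.Quotient.eq.mpr (Ideal.subset_span ⟨i, i', j, j', rfl⟩)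

section UniversalProperty

variable {S : Type*} [CommRing S] [Algebra k S]

variable (k) in
/-- The homomorphism classifying the matrix `t • u vᵀ` of rank at most one. -/
noncomputable def ofOuterProduct (t : S) (u : ι → S) (v : κ → S) : RankOneRing k ι κ →ₐ[k] S :=
  Ideal.Quotient.liftₐ _ (aeval fun p => t * u p.1 * v p.2) fun f hf => by
    let φ : MvPolynomial (ι × κ) k →ₐ[k] S := aeval fun p => t * u p.1 * v p.2
    refine (Ideal.span_le (I := RingHom.ker φ)).mpr ?_ hf
    rintro _ ⟨i, i', j, j', rfl⟩
    simp only [φ, SetLike.mem_coe, RingHom.mem_ker, map_sub, map_mul, aeval_X]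
    ring

@[simp]
lemma ofOuterProduct_entry (t : S) (u : ι → S) (v : κ → S) (i : ι) (j : κ) :
    ofOuterProduct k t u v (entry k i j) = t * u i * v j :=
  aeval_X ..

lemma algHom_ext {φ ψ : RankOneRing k ι κ →ₐ[k] S}
    (h : ∀ i j, φ (entry k i j) = ψ (entry k i j)) : φ = ψ :=
  Ideal.Quotient.algHom_ext k <| MvPolynomial.algHom_ext fun p => h p.1 p.2

end UniversalProperty

end Basic

section Chart

variable (k : Type*) {ι κ : Type*} [CommRing k] (i₀ : ι) (j₀ : κ)

/-- The polynomial ring `k[u, v]` in the ratios `u_i = x_{ij₀} / x_{i₀j₀}` and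
`v_j = x_{i₀j} / x_{i₀j₀}`; the ratios `u_{i₀} = v_{j₀} = 1` are left out. -/
abbrev RatioRing : Type _ :=
  MvPolynomial ({i // i ≠ i₀} ⊕ {j // j ≠ j₀}) k

/-- The coordinate ring `k[u, v][t, t⁻¹]` of the chart `x_{i₀j₀} ≠ 0`, with `t = x_{i₀j₀}`. -/
abbrev ChartRing : Type _ :=
  Localization.Away (Polynomial.X : Polynomial (RatioRing k i₀ j₀))

namespace ChartRing

variable {k i₀ j₀} in
/-- The inclusion of `k[u, v]`. -/
noncomputable def ofRatios : RatioRing k i₀ j₀ →ₐ[k] ChartRing k i₀ j₀ :=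
  (Algebra.algHom k (Polynomial (RatioRing k i₀ j₀)) _).comp Polynomial.CAlgHom

/-- The unit `t`. -/
noncomputable def scale : ChartRing k i₀ j₀ :=
  algebraMap (Polynomial (RatioRing k i₀ j₀)) _ Polynomial.X

lemma isUnit_scale : IsUnit (scale k i₀ j₀) :=
  IsLocalization.Away.algebraMap_isUnit _

open Classical in
/-- The ratio `u_i`, normalized by `u_{i₀} = 1`. -/
noncomputable def rowRatio (i : ι) : ChartRing k i₀ j₀ :=
  if h : i = i₀ then 1 else ofRatios (X (.inl ⟨i, h⟩))

open Classical in
/-- The ratio `v_j`, normalized by `v_{j₀} = 1`. -/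
noncomputable def colRatio (j : κ) : ChartRing k i₀ j₀ :=
  if h : j = j₀ then 1 else ofRatios (X (.inr ⟨j, h⟩))

@[simp]
lemma rowRatio_self : rowRatio k i₀ j₀ i₀ = 1 :=
  dif_pos rfl

@[simp]
lemma colRatio_self : colRatio k i₀ j₀ j₀ = 1 :=
  dif_pos rfl

lemma rowRatio_of_ne (i : {i // i ≠ i₀}) : rowRatio k i₀ j₀ i = ofRatios (X (.inl i)) :=
  dif_neg i.2

lemma colRatio_of_ne (j : {j // j ≠ j₀}) : colRatio k i₀ j₀ j = ofRatios (X (.inr j)) :=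
  dif_neg j.2

variable {k i₀ j₀} {S : Type*} [CommRing S] [Algebra k S]

lemma algHom_ext {φ ψ : ChartRing k i₀ j₀ →ₐ[k] S}
    (scale_eq : φ (scale k i₀ j₀) = ψ (scale k i₀ j₀))
    (row_eq : ∀ i, φ (rowRatio k i₀ j₀ i) = ψ (rowRatio k i₀ j₀ i))
    (col_eq : ∀ j, φ (colRatio k i₀ j₀ j) = ψ (colRatio k i₀ j₀ j)) : φ = ψ := by
  have ratios_eq : φ.comp ofRatios = ψ.comp ofRatios := by
    refine MvPolynomial.algHom_ext ?_
    rintro (i | j)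
    · simpa only [rowRatio_of_ne, AlgHom.comp_apply] using row_eq i
    · simpa only [colRatio_of_ne, AlgHom.comp_apply] using col_eq j
  exact Localization.algHom_ext _ (Polynomial.algHom_ext' ratios_eq scale_eq)

variable {t : S} (ht : IsUnit t) (u : ι → S) (v : κ → S)

variable (i₀ j₀) in
/-- The evaluation of polynomials in the ratios at `(u, v)`. -/
noncomputable def evalRatios : RatioRing k i₀ j₀ →ₐ[k] S :=
  aeval (Sum.elim (fun i => u i) (fun j => v j))

/-- The homomorphism with prescribed values on `t` and on the ratios. -/
noncomputable def lift : ChartRing k i₀ j₀ →ₐ[k] S :=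
  IsLocalization.Away.liftAlgHom (Polynomial.X : Polynomial (RatioRing k i₀ j₀))
    (f := Polynomial.aevalTower (evalRatios i₀ j₀ u v) t) <| by
      rwa [Polynomial.aevalTower_X]

lemma lift_scale : lift ht u v (scale k i₀ j₀) = t := by
  simp [lift, scale]

lemma lift_ofRatios (p : RatioRing k i₀ j₀) :
    lift ht u v (ofRatios p) = evalRatios i₀ j₀ u v p := by
  rw [lift, IsLocalization.Away.liftAlgHom_apply]
  exact (IsLocalization.Away.lift_eq ..).trans (Polynomial.aevalTower_C ..)

lemma lift_rowRatio (hu : u i₀ = 1) (i : ι) : lift ht u v (rowRatio k i₀ j₀ i) = u i := by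
  obtain rfl | hi := eq_or_ne i i₀
  · simp [hu]
  · simp [rowRatio_of_ne k i₀ j₀ ⟨i, hi⟩, lift_ofRatios, evalRatios]

lemma lift_colRatio (hv : v j₀ = 1) (j : κ) : lift ht u v (colRatio k i₀ j₀ j) = v j := by
  obtain rfl | hj := eq_or_ne j j₀
  · simp [hv]
  · simp [colRatio_of_ne k i₀ j₀ ⟨j, hj⟩, lift_ofRatios, evalRatios]

end ChartRing

open ChartRing

/-- The parametrization `x_{ij} ↦ t u_i v_j` of the chart. -/
noncomputable def awayToChart : Localization.Away (entry k i₀ j₀) →ₐ[k] ChartRing k i₀ j₀ :=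
  IsLocalization.Away.liftAlgHom (entry k i₀ j₀)
    (f := ofOuterProduct k (scale k i₀ j₀) (rowRatio k i₀ j₀) (colRatio k i₀ j₀)) <| by
      simpa using isUnit_scale k i₀ j₀

lemma awayToChart_entry (i : ι) (j : κ) : awayToChart k i₀ j₀ (algebraMap _ _ (entry k i j)) =
    scale k i₀ j₀ * rowRatio k i₀ j₀ i * colRatio k i₀ j₀ j := by
  simp [awayToChart]

/-- The quotient `x / x_{i₀j₀}`. -/
noncomputable def ratio (x : RankOneRing k ι κ) : Localization.Away (entry k i₀ j₀) :=
  algebraMap _ _ x * IsLocalization.Away.invSelf (entry k i₀ j₀)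

lemma algebraMap_entry_mul_ratio (x : RankOneRing k ι κ) :
    algebraMap _ _ (entry k i₀ j₀) * ratio k i₀ j₀ x = algebraMap _ _ x := by
  rw [ratio, mul_left_comm, IsLocalization.Away.mul_invSelf, mul_one]

lemma ratio_self : ratio k i₀ j₀ (entry k i₀ j₀) = 1 :=
  IsLocalization.Away.mul_invSelf _

lemma awayToChart_ratio {x : RankOneRing k ι κ} {y : ChartRing k i₀ j₀}
    (hxy : awayToChart k i₀ j₀ (algebraMap _ _ x) = scale k i₀ j₀ * y) :
    awayToChart k i₀ j₀ (ratio k i₀ j₀ x) = y := by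
  rw [← (isUnit_scale k i₀ j₀).mul_right_inj, ← hxy, ← algebraMap_entry_mul_ratio, map_mul,
    awayToChart_entry, rowRatio_self, colRatio_self, mul_one, mul_one]

/-- The inverse of the parametrization. -/
noncomputable def chartToAway : ChartRing k i₀ j₀ →ₐ[k] Localization.Away (entry k i₀ j₀) :=
  ChartRing.lift (IsLocalization.Away.algebraMap_isUnit (entry k i₀ j₀))
    (fun i => ratio k i₀ j₀ (entry k i j₀)) (fun j => ratio k i₀ j₀ (entry k i₀ j))

lemma chartToAway_scale :
    chartToAway k i₀ j₀ (scale k i₀ j₀) = algebraMap _ _ (entry k i₀ j₀) :=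
  lift_scale ..

lemma chartToAway_rowRatio (i : ι) :
    chartToAway k i₀ j₀ (rowRatio k i₀ j₀ i) = ratio k i₀ j₀ (entry k i j₀) :=
  lift_rowRatio _ (fun i => ratio k i₀ j₀ (entry k i j₀)) _ (ratio_self k i₀ j₀) i

lemma chartToAway_colRatio (j : κ) :
    chartToAway k i₀ j₀ (colRatio k i₀ j₀ j) = ratio k i₀ j₀ (entry k i₀ j) :=
  lift_colRatio _ _ (fun j => ratio k i₀ j₀ (entry k i₀ j)) (ratio_self k i₀ j₀) j

lemma awayToChart_comp_chartToAway :
    (awayToChart k i₀ j₀).comp (chartToAway k i₀ j₀) = AlgHom.id k _ := by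
  refine ChartRing.algHom_ext ?_ (fun i => ?_) (fun j => ?_)
  · simp [chartToAway_scale, awayToChart_entry]
  · rw [AlgHom.comp_apply, chartToAway_rowRatio]
    exact awayToChart_ratio k i₀ j₀ (by simp [awayToChart_entry])
  · rw [AlgHom.comp_apply, chartToAway_colRatio]
    exact awayToChart_ratio k i₀ j₀ (by simp [awayToChart_entry])

lemma chartToAway_comp_awayToChart :
    (chartToAway k i₀ j₀).comp (awayToChart k i₀ j₀) = AlgHom.id k _ := by
  refine Localization.algHom_ext _ (algHom_ext fun i j => ?_)
  change chartToAway k i₀ j₀ (awayToChart k i₀ j₀ (algebraMap _ _ (entry k i j))) =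
    algebraMap _ _ (entry k i j)
  rw [awayToChart_entry, map_mul, map_mul, chartToAway_scale, chartToAway_rowRatio,
    chartToAway_colRatio, algebraMap_entry_mul_ratio, ratio, ← mul_assoc, ← map_mul,
    entry_mul_entry i i₀ j₀ j, mul_comm (entry k i j), map_mul, mul_assoc,
    mul_left_comm, IsLocalization.Away.mul_invSelf, mul_one]

/-- The chart `x_{i₀j₀} ≠ 0` of the scheme of matrices of rank at most one. -/
noncomputable def chartEquiv : Localization.Away (entry k i₀ j₀) ≃ₐ[k] ChartRing k i₀ j₀ :=
  .ofAlgHom (awayToChart k i₀ j₀) (chartToAway k i₀ j₀)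
    (awayToChart_comp_chartToAway k i₀ j₀) (chartToAway_comp_awayToChart k i₀ j₀)

lemma formallySmooth_away_entry : Algebra.FormallySmooth k (Localization.Away (entry k i₀ j₀)) :=
  have : Algebra.FormallySmooth k (Polynomial (RatioRing k i₀ j₀)) :=
    .comp k (RatioRing k i₀ j₀) _
  .of_equiv (chartEquiv k i₀ j₀).symm

lemma ringKrullDim_away_entry [IsNoetherianRing k] [Finite ι] [Finite κ] :
    ringKrullDim (Localization.Away (entry k i₀ j₀)) =
      ringKrullDim k + (Nat.card ι + Nat.card κ - 1 : ℕ) := by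
  classical
  have card_rows : Nat.card {i // i ≠ i₀} + 1 = Nat.card ι := by
    rw [← Finite.card_option, Nat.card_congr (Equiv.optionSubtypeNe i₀)]
  have card_cols : Nat.card {j // j ≠ j₀} + 1 = Nat.card κ := by
    rw [← Finite.card_option, Nat.card_congr (Equiv.optionSubtypeNe j₀)]
  have card_eq : Nat.card ι + Nat.card κ - 1 =
      Nat.card {i // i ≠ i₀} + Nat.card {j // j ≠ j₀} + 1 := by
    lia
  rw [ringKrullDim_eq_of_ringEquiv (chartEquiv k i₀ j₀).toRingEquiv,
    ringKrullDim_eq_add_one_of_isLocalization_away_X (A := RatioRing k i₀ j₀),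
    MvPolynomial.ringKrullDim_of_isNoetherianRing, Nat.card_sum, card_eq, Nat.cast_succ, add_assoc]

end Chart

section Vertex

/-- The ideal of the zero matrix, the vertex of the cone of matrices of rank at most one. -/
noncomputable def vertexIdeal (k ι κ : Type*) [CommRing k] : Ideal (RankOneRing k ι κ) :=
  Ideal.span (Set.range fun p : ι × κ => Ideal.Quotient.mk (twoMinorsIdeal k ι κ) (X p))

lemma map_idealOfVars (k ι κ : Type*) [CommRing k] :
    (idealOfVars (ι × κ) k).map (Ideal.Quotient.mk (twoMinorsIdeal k ι κ)) = vertexIdeal k ι κ := by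
  rw [vertexIdeal, Ideal.map_span, ← Set.range_comp]
  rfl

lemma twoMinorsIdeal_le_sq (k ι κ : Type*) [CommRing k] :
    twoMinorsIdeal k ι κ ≤ idealOfVars (ι × κ) k ^ 2 := by
  refine Ideal.span_le.mpr ?_
  rintro _ ⟨i, i', j, j', rfl⟩
  have X_mul_X_mem (p q : ι × κ) : (X p * X q : MvPolynomial (ι × κ) k) ∈ idealOfVars _ k ^ 2 :=
    pow_two (idealOfVars (ι × κ) k) ▸
      Ideal.mul_mem_mul (Ideal.subset_span ⟨p, rfl⟩) (Ideal.subset_span ⟨q, rfl⟩)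
  exact sub_mem (X_mul_X_mem _ _) (X_mul_X_mem _ _)

lemma not_twoMinorsIdeal_le_cube (k ι κ : Type*) [CommRing k] [Nontrivial k] [Nontrivial ι]
    [Nontrivial κ] : ¬ twoMinorsIdeal k ι κ ≤ idealOfVars (ι × κ) k ^ 3 := by
  classical
  intro hle
  obtain ⟨i, i', hi⟩ := exists_pair_ne ι
  obtain ⟨j, j', hj⟩ := exists_pair_ne κ
  have hmem := hle (Ideal.subset_span ⟨i, i', j, j', rfl⟩)
  have hcoeff := (mem_pow_idealOfVars_iff' 3 _).mp hmem
    (Finsupp.single (i, j) 1 + Finsupp.single (i', j') 1) (by simp)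
  have hne : Finsupp.single (i, j') 1 + Finsupp.single (i', j) 1 ≠
      (Finsupp.single (i, j) 1 + Finsupp.single (i', j') 1 : ι × κ →₀ ℕ) := fun h => by
    simpa [Finsupp.single_apply, hi.symm, hj.symm] using DFunLike.congr_fun h (i, j)
  simp [X, monomial_mul, coeff_sub, coeff_monomial, hne] at hcoeff

variable {k ι κ : Type*} [Field k]

instance isMaximal_vertexIdeal : (vertexIdeal k ι κ).IsMaximal := by
  rw [← map_idealOfVars]
  refine Ideal.IsMaximal.map_of_surjective_of_ker_le Ideal.Quotient.mk_surjective ?_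
  rw [Ideal.mk_ker]
  exact (twoMinorsIdeal_le_sq k ι κ).trans (Ideal.pow_le_self two_ne_zero)

lemma exists_entry_notMem {P : Ideal (RankOneRing k ι κ)} (hP : P ≠ ⊤)
    (hPv : P ≠ vertexIdeal k ι κ) : ∃ i j, entry k i j ∉ P := by
  by_contra! hmem
  refine hPv (isMaximal_vertexIdeal.eq_of_le hP (Ideal.span_le.mpr ?_)).symm
  rintro _ ⟨p, rfl⟩
  exact hmem p.1 p.2

theorem ringKrullDim_eq [Finite ι] [Finite κ] [Nonempty ι] [Nonempty κ] :
    ringKrullDim (RankOneRing k ι κ) = (Nat.card ι + Nat.card κ - 1 : ℕ) := by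
  have chart_dim (i : ι) (j : κ) : ringKrullDim (Localization.Away (entry k i j)) =
      (Nat.card ι + Nat.card κ - 1 : ℕ) := by
    rw [ringKrullDim_away_entry, ringKrullDim_eq_zero_of_field, zero_add]
  refine le_antisymm ?_ ?_
  · refine ringKrullDim_le_of_forall_exists_away_le fun P hP hPmax => ?_
    obtain ⟨i, j, hij⟩ := exists_entry_notMem hP.ne_top
      (fun hPv => hPmax (hPv ▸ isMaximal_vertexIdeal))
    exact ⟨entry k i j, hij, (chart_dim i j).le⟩
  · obtain ⟨i⟩ := ‹Nonempty ι›
    obtain ⟨j⟩ := ‹Nonempty κ›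
    rw [← chart_dim i j]
    exact ringKrullDim_le_of_isLocalization (.powers (entry k i j)) _

theorem formallySmooth_localization_atPrime {P : Ideal (RankOneRing k ι κ)} [P.IsPrime]
    (hP : P ≠ vertexIdeal k ι κ) : Algebra.FormallySmooth k (Localization.AtPrime P) := by
  obtain ⟨i, j, hij⟩ := exists_entry_notMem ‹P.IsPrime›.ne_top hP
  have := formallySmooth_away_entry k i j
  exact formallySmooth_localization_atPrime_of_away hij

theorem ne_vertexIdeal_of_formallySmooth [Nontrivial ι] [Nontrivial κ]
    {P : Ideal (RankOneRing k ι κ)} [P.IsPrime]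
    [Algebra.FormallySmooth k (Localization.AtPrime P)] : P ≠ vertexIdeal k ι κ := by
  rw [← map_idealOfVars]
  rintro rfl
  exact not_twoMinorsIdeal_le_cube k ι κ
    (le_pow_of_formallySmooth_localization_quotient k (twoMinorsIdeal_le_sq k ι κ) 3)

end Vertex

end RankOneRing

theorem determinantal_unique_singular_point_general {k ι κ : Type*} [Field k] [Finite ι] [Finite κ]
    [Nontrivial ι] [Nontrivial κ] :
    ringKrullDim (RankOneRing k ι κ) = (Nat.card ι + Nat.card κ - 1 : ℕ) ∧
    ∀ P : PrimeSpectrum (RankOneRing k ι κ),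
      (Algebra.FormallySmooth k (Localization.AtPrime P.asIdeal) ↔
        P.asIdeal ≠ RankOneRing.vertexIdeal k ι κ) := by
  refine ⟨RankOneRing.ringKrullDim_eq, ?_⟩
  exact fun P => ⟨fun _ => RankOneRing.ne_vertexIdeal_of_formallySmooth,
    RankOneRing.formallySmooth_localization_atPrime⟩

theorem determinantal_unique_singular_point
    (k : Type) [Field k] (r c : ℕ) (hr : 2 ≤ r) (hc : 2 ≤ c)
    (I : Ideal (MvPolynomial (Fin r × Fin c) k))
    (hI : I = Ideal.span {f | ∃ (i i' : Fin r) (j j' : Fin c),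
      f = X (i, j) * X (i', j') - X (i, j') * X (i', j)}) :
    -- Spec A has dimension r + c - 1
    ringKrullDim ((MvPolynomial (Fin r × Fin c) k) ⧸ I) = (r + c - 1 : ℕ) ∧
    -- a prime P of A is a smooth point iff it is not the point V(x_{i,j})
    ∀ P : PrimeSpectrum ((MvPolynomial (Fin r × Fin c) k) ⧸ I),
      (Algebra.FormallySmooth k (Localization.AtPrime P.asIdeal) ↔
        P.asIdeal ≠ Ideal.span (Set.range
          fun p : Fin r × Fin c => Ideal.Quotient.mk I (X p))) := by
  subst hI
  have : Nontrivial (Fin r) := Fin.nontrivial_iff_two_le.mpr hr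
  have : Nontrivial (Fin c) := Fin.nontrivial_iff_two_le.mpr hc
  have h := determinantal_unique_singular_point_general (k := k) (ι := Fin r) (κ := Fin c)
  rwa [Nat.card_fin, Nat.card_fin] at h
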